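/- arXiv:1712.03913 — 2 statements merged into one kernel-verified Lean document; each statement's English description precedes it below -/
import Mathlib

section
/- Under Assumption 2.b, every sequential maximization pair is a pure-strategy Nash equilibrium of the cooperative game, and the set of sequential maximization pairs is nonempty. -/
open scoped Classical

noncomputable section

/-- Sequential game payoff of the leader (depends only on his own trajectory). -/
def aSeq {Γ1 : Type*} (κ : ℝ) (T1 : Γ1 → Prop) (p1 : Γ1 → ℝ) (i : Γ1) : ℝ :=
  if T1 i then κ else p1 i

/-- Follower payoff (same in the sequential and the cooperative game). -/
def bPay {Γ1 Γ2 : Type*} (κ lam : ℝ) (T2 : Γ2 → Prop) (C : Γ1 → Γ2 → Prop)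
    (p2 : Γ2 → ℝ) (i : Γ1) (j : Γ2) : ℝ :=
  if T2 j then κ else if C i j then lam else p2 j

/-- Cooperative game payoff of the leader. -/
def aPay {Γ1 Γ2 : Type*} (κ lam : ℝ) (T1 : Γ1 → Prop) (C : Γ1 → Γ2 → Prop)
    (p1 : Γ1 → ℝ) (i : Γ1) (j : Γ2) : ℝ :=
  if T1 i then κ else if C i j then lam else p1 i

/-- Blocking game payoff of the leader. -/
def aBl {Γ1 Γ2 : Type*} (κ lam w : ℝ) (T1 : Γ1 → Prop) (C : Γ1 → Γ2 → Prop)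
    (p1 : Γ1 → ℝ) (p2 : Γ2 → ℝ) (i : Γ1) (j : Γ2) : ℝ :=
  if T1 i then κ else if C i j then lam else if p1 i < p2 j then p1 i else p1 i + w

/-- Blocking game payoff of the follower. -/
def bBl {Γ1 Γ2 : Type*} (κ lam w : ℝ) (T2 : Γ2 → Prop) (C : Γ1 → Γ2 → Prop)
    (p1 : Γ1 → ℝ) (p2 : Γ2 → ℝ) (i : Γ1) (j : Γ2) : ℝ :=
  if T2 j then κ else if C i j then lam else if p1 i ≥ p2 j then p2 j else p2 j + w

/-- A trajectory pair is feasible: stays on track and does not collide. -/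
def Feasible {Γ1 Γ2 : Type*} (T1 : Γ1 → Prop) (T2 : Γ2 → Prop) (C : Γ1 → Γ2 → Prop)
    (i : Γ1) (j : Γ2) : Prop :=
  ¬ T1 i ∧ ¬ T2 j ∧ ¬ C i j

/-- Best-response set of player 2 to strategy `i` of player 1. -/
def BestResponse {Γ1 Γ2 : Type*} (B : Γ1 → Γ2 → ℝ) (i : Γ1) : Set Γ2 :=
  {j | ∀ j', B i j' ≤ B i j}

/-- Stackelberg equilibrium with player 1 as leader. -/
def StackelbergEq {Γ1 Γ2 : Type*} (A B : Γ1 → Γ2 → ℝ) (iStar : Γ1) (jStar : Γ2) : Prop :=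
  (∀ i, sInf (A i '' BestResponse B i) ≤ sInf (A iStar '' BestResponse B iStar)) ∧
  jStar ∈ BestResponse B iStar

/-- Pure-strategy Nash equilibrium. -/
def NashEq {Γ1 Γ2 : Type*} (A B : Γ1 → Γ2 → ℝ) (iStar : Γ1) (jStar : Γ2) : Prop :=
  (∀ i, A i jStar ≤ A iStar jStar) ∧ (∀ j, B iStar j ≤ B iStar jStar)

/-- Sequential maximization pair: the leader maximizes `aSeq`, the follower best responds. -/
def SeqMaxPair {Γ1 Γ2 : Type*} (κ lam : ℝ) (T1 : Γ1 → Prop) (T2 : Γ2 → Prop)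
    (C : Γ1 → Γ2 → Prop) (p1 : Γ1 → ℝ) (p2 : Γ2 → ℝ) (iS : Γ1) (jS : Γ2) : Prop :=
  (∀ i, aSeq κ T1 p1 i ≤ aSeq κ T1 p1 iS) ∧
  (∀ j, bPay κ lam T2 C p2 iS j ≤ bPay κ lam T2 C p2 iS jS)

/-- Assumption 2.a: a feasible trajectory pair exists. -/
def AssumptionA {Γ1 Γ2 : Type*} (T1 : Γ1 → Prop) (T2 : Γ2 → Prop)
    (C : Γ1 → Γ2 → Prop) : Prop :=
  ∃ i j, Feasible T1 T2 C i j

/-- Assumption 2.b. -/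
def AssumptionB {Γ1 Γ2 : Type*} (κ lam : ℝ) (T1 : Γ1 → Prop) (T2 : Γ2 → Prop)
    (C : Γ1 → Γ2 → Prop) (p1 : Γ1 → ℝ) (p2 : Γ2 → ℝ) : Prop :=
  (∃ i, ¬ T1 i) ∧
  ∃ jbar : Γ2, ∀ i' : Γ1, (∀ i, aSeq κ T1 p1 i ≤ aSeq κ T1 p1 i') →
    lam < bPay κ lam T2 C p2 i' jbar

/-- Blocking trajectory pair. -/
def BlockingPair {Γ1 Γ2 : Type*} (T1 : Γ1 → Prop) (T2 : Γ2 → Prop)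
    (C : Γ1 → Γ2 → Prop) (p1 : Γ1 → ℝ) (p2 : Γ2 → ℝ) (i : Γ1) (j : Γ2) : Prop :=
  Feasible T1 T2 C i j ∧ p2 j < p1 i ∧ ∀ jc, p2 j < p2 jc → (T2 jc ∨ C i jc)

theorem aPay_le_aSeq {Γ1 Γ2 : Type*} {κ lam : ℝ} (hlam0 : lam < 0) (T1 : Γ1 → Prop)
    (C : Γ1 → Γ2 → Prop) {p1 : Γ1 → ℝ} (hp1 : ∀ i, 0 < p1 i) (i : Γ1) (j : Γ2) :
    aPay κ lam T1 C p1 i j ≤ aSeq κ T1 p1 i := by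
  have := hp1 i
  unfold aPay aSeq
  split_ifs <;> linarith

theorem aPay_eq_aSeq_of_not_collision {Γ1 Γ2 : Type*} (κ lam : ℝ) (T1 : Γ1 → Prop)
    {C : Γ1 → Γ2 → Prop} (p1 : Γ1 → ℝ) {i : Γ1} {j : Γ2} (hC : ¬ C i j) :
    aPay κ lam T1 C p1 i j = aSeq κ T1 p1 i := by
  simp [aPay, aSeq, hC]

theorem not_collision_of_lt_bPay {Γ1 Γ2 : Type*} {κ lam : ℝ} (hκlam : κ < lam)
    {T2 : Γ2 → Prop} {C : Γ1 → Γ2 → Prop} {p2 : Γ2 → ℝ} {i : Γ1} {j : Γ2}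
    (h : lam < bPay κ lam T2 C p2 i j) : ¬ C i j := by
  intro hC
  simp only [bPay, hC, if_true] at h
  split_ifs at h <;> linarith

theorem stmt9 {Γ1 Γ2 : Type*} [Fintype Γ1] [Fintype Γ2] [Nonempty Γ1] [Nonempty Γ2]
    (κ lam : ℝ) (hκlam : κ < lam) (hlam0 : lam < 0)
    (T1 : Γ1 → Prop) (T2 : Γ2 → Prop) (C : Γ1 → Γ2 → Prop)
    (p1 : Γ1 → ℝ) (p2 : Γ2 → ℝ)
    (hp1 : ∀ i, 0 < p1 i) (hp2 : ∀ j, 0 < p2 j)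
    (hB : AssumptionB κ lam T1 T2 C p1 p2) :
    (∀ (i : Γ1) (j : Γ2), SeqMaxPair κ lam T1 T2 C p1 p2 i j →
      NashEq (aPay κ lam T1 C p1) (bPay κ lam T2 C p2) i j) ∧
    ∃ (i : Γ1) (j : Γ2), SeqMaxPair κ lam T1 T2 C p1 p2 i j := by
  constructor
  · rintro i j ⟨hi, hj⟩
    refine ⟨fun i' => ?_, hj⟩
    obtain ⟨-, jbar, hjbar⟩ := hB
    have hC : ¬ C i j := not_collision_of_lt_bPay hκlam ((hjbar i hi).trans_le (hj jbar))
    rw [aPay_eq_aSeq_of_not_collision κ lam T1 p1 hC]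
    exact (aPay_le_aSeq hlam0 T1 C hp1 i' j).trans (hi i')
  · obtain ⟨i, hi⟩ := Finite.exists_max (aSeq κ T1 p1)
    obtain ⟨j, hj⟩ := Finite.exists_max (bPay κ lam T2 C p2 i)
    exact ⟨i, j, hi, hj⟩

end
end

section
/- Let w ≥ 0 and suppose Assumption 2.a holds. Then every Stackelberg equilibrium of the cooperative game is a pure-strategy Nash equilibrium of the blocking game. -/
open scoped Classical

noncomputable section

/-- A positive follower payoff is available against `i` whenever `i` belongs to a feasible pair,
so the follower then avoids leaving the track and colliding. -/
lemma le_sInf_aPay_of_feasible {Γ1 Γ2 : Type*} [Finite Γ2] [Nonempty Γ2]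
    {κ lam : ℝ} (hκlam : κ < lam) (hlam0 : lam < 0)
    {T1 : Γ1 → Prop} {T2 : Γ2 → Prop} {C : Γ1 → Γ2 → Prop}
    (p1 : Γ1 → ℝ) {p2 : Γ2 → ℝ} (hp2 : ∀ j, 0 < p2 j)
    {i : Γ1} {j : Γ2} (hij : Feasible T1 T2 C i j) :
    p1 i ≤ sInf (aPay κ lam T1 C p1 i '' BestResponse (bPay κ lam T2 C p2) i) := by
  obtain ⟨hT1, hT2, hC⟩ := hij
  obtain ⟨m, hm⟩ := Finite.exists_max (bPay κ lam T2 C p2 i)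
  refine le_csInf ⟨_, m, hm, rfl⟩ ?_
  rintro _ ⟨k, hk, rfl⟩
  have hjk : bPay κ lam T2 C p2 i j ≤ bPay κ lam T2 C p2 i k := hk j
  have hj := hp2 j
  have hCk : ¬ C i k := by
    intro h
    simp only [bPay, hT2, hC, h, if_true, if_false] at hjk
    split_ifs at hjk <;> linarith
  simp [aPay, hT1, hCk]

theorem stmt14 {Γ1 Γ2 : Type*} [Fintype Γ1] [Fintype Γ2] [Nonempty Γ1] [Nonempty Γ2]
    (κ lam : ℝ) (hκlam : κ < lam) (hlam0 : lam < 0)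
    (T1 : Γ1 → Prop) (T2 : Γ2 → Prop) (C : Γ1 → Γ2 → Prop)
    (p1 : Γ1 → ℝ) (p2 : Γ2 → ℝ)
    (hp1 : ∀ i, 0 < p1 i) (hp2 : ∀ j, 0 < p2 j)
    (w : ℝ) (hw : 0 ≤ w)
    (hA : AssumptionA T1 T2 C)
    (icg : Γ1) (jcg : Γ2)
    (hst : StackelbergEq (aPay κ lam T1 C p1) (bPay κ lam T2 C p2) icg jcg) :
    NashEq (aBl κ lam w T1 C p1 p2) (bBl κ lam w T2 C p1 p2) icg jcg := by
  obtain ⟨hmax, hbest⟩ := hst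
  have hle : ∀ i j, Feasible T1 T2 C i j → p1 i ≤ aPay κ lam T1 C p1 icg jcg := fun i j hij =>
    ((le_sInf_aPay_of_feasible hκlam hlam0 p1 hp2 hij).trans (hmax i)).trans
      (csInf_le (Set.toFinite _).bddBelow ⟨jcg, hbest, rfl⟩)
  obtain ⟨i₀, j₀, h₀⟩ := hA
  have hpos : 0 < aPay κ lam T1 C p1 icg jcg := (hp1 i₀).trans_le (hle i₀ j₀ h₀)
  have hT1 : ¬ T1 icg := by
    intro h
    simp only [aPay, h, if_true] at hpos
    linarith
  have hC : ¬ C icg jcg := by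
    intro h
    simp only [aPay, hT1, h, if_true, if_false] at hpos
    linarith
  have hb : ∀ j, bPay κ lam T2 C p2 icg j ≤ bPay κ lam T2 C p2 icg jcg := hbest
  have hT2 : ¬ T2 jcg := by
    intro h
    have hj₀ := hb j₀
    have hpj₀ := hp2 j₀
    simp only [bPay, h, h₀.2.1, if_true, if_false] at hj₀
    split_ifs at hj₀ <;> linarith
  simp only [aPay, hT1, hC, if_false] at hle
  simp only [bPay, hT2, hC, if_false] at hb
  have hpi := hp1 icg
  have hpj := hp2 jcg
  refine ⟨fun i => ?_, fun j => ?_⟩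
  · have hi := hle i jcg
    simp only [aBl, Feasible, hT1, hT2, hC, if_false] at hi ⊢
    split_ifs at hi ⊢ <;> first | linarith | (have := hi ⟨‹_›, not_false, ‹_›⟩; linarith)
  · have hj := hb j
    simp only [bBl, hT2, hC, if_false]
    split_ifs at hj ⊢ <;> linarith

end
end
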